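/- Let a, a', b, a₁, a₁', b₁ > 0 and let X ~ μ_{a,a',b}. Then 1 − X ~ μ_{a₁,a₁',b₁} if and only if a₁ = a', a₁' = a, and b = b₁ = a + a'. -/

import Mathlib

open MeasureTheory ProbabilityTheory Real Set Filter Topology

noncomputable def gammaDens (p σ y : ℝ) : ℝ :=
  if 0 < y then σ ^ p / Real.Gamma p * Real.exp (-(σ * y)) * y ^ (p - 1) else 0

noncomputable def gammaM (p σ : ℝ) : Measure ℝ :=
  MeasureTheory.volume.withDensity fun y => ENNReal.ofReal (gammaDens p σ y)

noncomputable def beta1Dens (p q x : ℝ) : ℝ :=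
  if 0 < x ∧ x < 1 then
    Real.Gamma (p + q) / (Real.Gamma p * Real.Gamma q) * x ^ (p - 1) * (1 - x) ^ (q - 1)
  else 0

noncomputable def beta1 (p q : ℝ) : Measure ℝ :=
  MeasureTheory.volume.withDensity fun x => ENNReal.ofReal (beta1Dens p q x)

noncomputable def beta2Dens (p q y : ℝ) : ℝ :=
  if 0 < y then
    Real.Gamma (p + q) / (Real.Gamma p * Real.Gamma q) * y ^ (p - 1) * (1 + y) ^ (-(p + q))
  else 0

noncomputable def beta2 (p q : ℝ) : Measure ℝ :=
  MeasureTheory.volume.withDensity fun y => ENNReal.ofReal (beta2Dens p q y)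

/-- Pochhammer (rising factorial) symbol `(a)_n`. -/
noncomputable def poch (a : ℝ) (n : ℕ) : ℝ := ∏ i ∈ Finset.range n, (a + (i : ℝ))

/-- Gauss hypergeometric function `₂F₁(a,b;c;x)`. -/
noncomputable def F21 (a b c x : ℝ) : ℝ :=
  ∑' n : ℕ, poch a n * poch b n / ((n.factorial : ℝ) * poch c n) * x ^ n

/-- Generalized hypergeometric `₃F₂(a₁,a₂,a₃;b₁,b₂;1)` at unit argument. -/
noncomputable def F32one (a1 a2 a3 b1 b2 : ℝ) : ℝ :=
  ∑' n : ℕ, poch a1 n * poch a2 n * poch a3 n /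
    ((n.factorial : ℝ) * poch b1 n * poch b2 n)

/-- Normalizing constant of the real beta-hypergeometric distribution. -/
noncomputable def Cbh (a a' b : ℝ) : ℝ :=
  Real.Gamma (a + b) / (Real.Gamma a * Real.Gamma b * F32one a a b (a + b) (a + a'))

noncomputable def bhDens (a a' b x : ℝ) : ℝ :=
  if 0 < x ∧ x < 1 then
    Cbh a a' b * x ^ (a - 1) * (1 - x) ^ (b - 1) * F21 a b (a + a') x
  else 0

/-- The real beta-hypergeometric distribution `μ_{a,a',b}`. -/
noncomputable def bhMeasure (a a' b : ℝ) : Measure ℝ :=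
  MeasureTheory.volume.withDensity fun x => ENNReal.ofReal (bhDens a a' b x)


noncomputable def co (a b c : ℝ) (n : ℕ) : ℝ :=
  poch a n * poch b n / ((n.factorial : ℝ) * poch c n)

lemma F21_def (a b c x : ℝ) : F21 a b c x = ∑' n : ℕ, co a b c n * x ^ n := rfl

lemma poch_zero (a : ℝ) : poch a 0 = 1 := by simp [poch]

lemma poch_succ (a : ℝ) (n : ℕ) : poch a (n+1) = poch a n * (a + n) := by
  simp [poch, Finset.prod_range_succ]

lemma poch_succ' (a : ℝ) (n : ℕ) : poch a (n+1) = a * poch (a+1) n := by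
  simp only [poch, Finset.prod_range_succ']
  rw [mul_comm]
  congr 1
  · simp
  · apply Finset.prod_congr rfl; intro i _; push_cast; ring

lemma poch_pos {a : ℝ} (ha : 0 < a) (n : ℕ) : 0 < poch a n := by
  unfold poch; apply Finset.prod_pos; intro i _; positivity

lemma co_zero (a b c : ℝ) : co a b c 0 = 1 := by simp [co, poch_zero]

lemma co_succ (a b : ℝ) {c : ℝ} (hc : 0 < c) (n : ℕ) :
    co a b c (n+1) = co a b c n * ((a+n)*(b+n)/((n+1)*(c+n))) := by
  have := poch_pos hc n
  have h2 : 0 < c + n := by positivity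
  unfold co
  simp only [poch_succ, Nat.factorial_succ]
  push_cast
  field_simp

lemma co_shift (a b : ℝ) {c : ℝ} (hc : 0 < c) (n : ℕ) :
    co a b c (n+1) * (n+1) = a*b/c * co (a+1) (b+1) (c+1) n := by
  have := poch_pos (show 0 < c+1 by positivity) n
  unfold co
  simp only [poch_succ', Nat.factorial_succ]
  push_cast
  field_simp

lemma co_pos {a b c : ℝ} (ha : 0 < a) (hb : 0 < b) (hc : 0 < c) (n : ℕ) : 0 < co a b c n := by
  have := poch_pos ha n
  have := poch_pos hb n
  have := poch_pos hc n
  unfold co; positivity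

lemma co_cc (a : ℝ) {c : ℝ} (hc : 0 < c) (n : ℕ) : co a c c n = poch a n / n.factorial := by
  have := poch_pos hc n
  unfold co; field_simp

lemma co_cc' (a : ℝ) {c : ℝ} (hc : 0 < c) : co a c c = co a 1 1 := by
  ext n; rw [co_cc a hc, co_cc a one_pos]

lemma tendsto_affine_ratio (u v : ℝ) : Tendsto (fun n : ℕ => (u + n) / (v + n)) atTop (𝓝 1) := by
  have h1 : ∀ w : ℝ, Tendsto (fun n : ℕ => w / n + 1) atTop (𝓝 1) := by
    intro w
    simpa using (tendsto_const_div_atTop_nhds_zero_nat w).add_const 1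
  have h := (h1 u).div (h1 v) one_ne_zero
  rw [div_one] at h
  refine h.congr' ?_
  filter_upwards [eventually_gt_atTop 0] with n hn
  have : (0:ℝ) < n := by exact_mod_cast hn
  simp only [Pi.div_apply]
  rw [div_add_one this.ne', div_add_one this.ne', div_div_div_cancel_right₀ this.ne']

lemma summ_aux (a b : ℝ) {c : ℝ} (hc : 0 < c) {x : ℝ} (hx : |x| < 1) :
    Summable (fun n : ℕ => ((n:ℝ)+1) * co a b c n * x ^ n) := by
  obtain ⟨r, hr1, hr2⟩ := exists_between hx
  apply summable_of_ratio_norm_eventually_le hr2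
  have ht : Tendsto (fun n : ℕ => ((2:ℝ)+n)/(1+n) * ((a+n)/(1+n)) * ((b+n)/(c+n)) * x) atTop (𝓝 x) := by
    simpa using (((tendsto_affine_ratio 2 1).mul (tendsto_affine_ratio a 1)).mul
      (tendsto_affine_ratio b c)).mul_const x
  filter_upwards [ht.abs.eventually_le_const hr1] with n hn
  have h2 : 0 < c + n := by positivity
  have e : (((n+1:ℕ):ℝ)+1) * co a b c (n+1) * x ^ (n+1)
      = (((2:ℝ)+n)/(1+n) * ((a+n)/(1+n)) * ((b+n)/(c+n)) * x) * (((n:ℝ)+1) * co a b c n * x ^ n) := by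
    rw [co_succ a b hc]; push_cast; field_simp; ring
  rw [e, norm_mul]
  exact mul_le_mul_of_nonneg_right hn (norm_nonneg _)

lemma summ (a b : ℝ) {c : ℝ} (hc : 0 < c) {x : ℝ} (hx : |x| < 1) :
    Summable (fun n : ℕ => co a b c n * x ^ n) := by
  apply Summable.of_norm_bounded (summ_aux a b hc hx).norm
  intro n
  rw [mul_assoc, norm_mul ((n:ℝ)+1)]
  apply le_mul_of_one_le_left (norm_nonneg _)
  rw [Real.norm_of_nonneg (by positivity)]
  linarith [(Nat.cast_nonneg n : (0:ℝ) ≤ n)]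

lemma F21_hasDerivAt (a b : ℝ) {c : ℝ} (hc : 0 < c) {x : ℝ} (hx : |x| < 1) :
    HasDerivAt (F21 a b c) (a*b/c * F21 (a+1) (b+1) (c+1) x) x := by
  obtain ⟨r, hr1, hr2⟩ := exists_between hx
  have hr0 : 0 < r := (abs_nonneg x).trans_lt hr1
  have hsr := summ_aux (a+1) (b+1) (show 0 < c+1 by positivity) (x := r) (by rwa [abs_of_pos hr0])
  have hs0 := summ (a+1) (b+1) (show 0 < c+1 by positivity) (x := r) (by rwa [abs_of_pos hr0])
  have hu : Summable (fun n : ℕ => ‖co a b c n * (n * r ^ (n-1))‖) := by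
    rw [← summable_nat_add_iff 1]
    refine ((hs0.mul_left (a*b/c)).norm).congr ?_
    intro n
    congr 1
    rw [← mul_assoc, ← co_shift a b hc]
    rw [Nat.add_sub_cancel]; push_cast; ring
  have h := hasDerivAt_tsum_of_isPreconnected (𝕜 := ℝ) (F := ℝ) (t := Metric.ball (0:ℝ) r)
    (g := fun n y => co a b c n * y ^ n) (g' := fun n y => co a b c n * (n * y ^ (n-1)))
    (y₀ := 0) (y := x) hu Metric.isOpen_ball (convex_ball _ _).isPreconnected
    (fun n y _ => (hasDerivAt_pow n y).const_mul _)
    (by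
      intro n y hy
      have hy : |y| < r := by simpa using hy
      simp only [norm_mul, norm_pow]
      gcongr
      rw [Real.norm_eq_abs, Real.norm_eq_abs, abs_of_pos hr0]; exact hy.le)
    (by simpa using hr0) (by
      exact summ a b hc (by simp)) (by simpa using hr1)
  refine (h.congr_deriv ?_)
  have hs : Summable (fun n : ℕ => co a b c n * (n * x ^ (n-1))) := by
    refine Summable.of_norm_bounded hu ?_
    intro n
    simp only [norm_mul, norm_pow]
    gcongr
    rw [Real.norm_eq_abs, Real.norm_eq_abs, abs_of_pos hr0]; exact hr1.le
  rw [hs.tsum_eq_zero_add, F21_def, ← tsum_mul_left]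
  simp only [Nat.cast_zero, zero_mul, mul_zero, zero_add]
  apply tsum_congr
  intro n
  rw [← mul_assoc (a*b/c), ← co_shift a b hc]
  rw [Nat.add_sub_cancel]; push_cast; ring

lemma F21_zero (a b c : ℝ) : F21 a b c 0 = 1 := by
  rw [F21_def, tsum_eq_single 0]
  · simp [co_zero]
  · intro n hn; simp [hn]

lemma F21_one_le {a b c x : ℝ} (ha : 0 < a) (hb : 0 < b) (hc : 0 < c) (hx : 0 ≤ x) (hx1 : x < 1) :
    1 ≤ F21 a b c x := by
  have h := (summ a b hc (x := x) (by rwa [abs_of_nonneg hx])).le_tsum 0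
    (fun n _ => mul_nonneg (co_pos ha hb hc n).le (pow_nonneg hx n))
  rw [F21_def]
  simpa [co_zero] using h

lemma F21_continuousAt (a b : ℝ) {c : ℝ} (hc : 0 < c) {x : ℝ} (hx : |x| < 1) :
    ContinuousAt (F21 a b c) x := (F21_hasDerivAt a b hc hx).continuousAt

lemma poch_eq_asc (s : ℝ) (n : ℕ) : poch s n = (ascPochhammer ℝ n).eval s := by
  induction n with
  | zero => simp [poch_zero]
  | succ n ih => rw [poch_succ, ascPochhammer_succ_eval, ih]

/-- binomial series -/
lemma F21_cc (s : ℝ) {c : ℝ} (hc : 0 < c) {x : ℝ} (hx : |x| < 1) :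
    F21 s c c x = (1 - x) ^ (-s) := by
  have h := (Real.one_div_one_sub_rpow_hasFPowerSeriesOnBall_zero s).hasSum (y := x) (by
      rw [Metric.mem_eball, edist_zero_right, ← ofReal_norm, Real.norm_eq_abs]
      simpa using hx)
  simp only [FormalMultilinearSeries.ofScalars, zero_add] at h
  have hx1 : 0 < 1 - x := by linarith [(abs_lt.1 hx).2]
  rw [Real.rpow_neg hx1.le, ← one_div, ← h.tsum_eq, F21_def]
  apply tsum_congr
  intro n
  rw [co_cc s hc]
  have e := Ring.factorial_nsmul_multichoose_eq_ascPochhammer s n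
  rw [Ring.multichoose_eq, Polynomial.ascPochhammer_smeval_eq_eval, ← poch_eq_asc] at e
  have hf : (n.factorial : ℝ) ≠ 0 := by positivity
  have e2 : poch s n / n.factorial = Ring.choose (s + n - 1) n := by
    rw [← e, nsmul_eq_mul]; field_simp
  rw [e2]
  simp

lemma euler_ring {R : Type*} [CommRing R] (X a b c s F F1 F2 H H1 H2 : R) (hs : s = a + b - c)
    (h1 : (1 - X) * H1 = - s * H) (h2 : (1-X) * H2 - H1 = - s * H1)
    (hF : X * (1-X) * F2 + (c - (a+b+1) * X) * F1 - a*b*F = 0) :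
    (1-X) * (X * (1-X) * (H2 * F + 2 * H1 * F1 + H * F2)
      + (c - ((c-a)+(c-b)+1) * X) * (H1 * F + H * F1) - (c-a)*(c-b)*(H*F)) = 0 := by
  subst hs
  have h3 : (1-X)^2 * H2 = (1 - (a+b-c)) * (-(a+b-c) * H) := by
    linear_combination (1-X) * h2 + (1 - (a+b-c)) * h1
  linear_combination X * F * h3 + (2 * X * (1-X) * F1 + (c - ((c-a)+(c-b)+1) * X) * F) * h1 + H * (1-X) * hF

open PowerSeries in
lemma ode_coeff (f : PowerSeries ℝ) (a b c : ℝ) (n : ℕ) :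
    PowerSeries.coeff n (X * (1-X) * (d⁄dX ℝ (d⁄dX ℝ f)) + (C c - (C a + C b + 1) * X) * (d⁄dX ℝ f)
      - C a * C b * f) = (n+1)*(c+n) * coeff (n+1) f - (a+n)*(b+n) * coeff n f := by
  have e : X * (1-X) * (d⁄dX ℝ (d⁄dX ℝ f)) + (C c - (C a + C b + 1) * X) * (d⁄dX ℝ f)
      - C a * C b * f = X * (d⁄dX ℝ (d⁄dX ℝ f)) - X * (X * (d⁄dX ℝ (d⁄dX ℝ f)))
        + C c * (d⁄dX ℝ f) - C (a+b+1) * (X * (d⁄dX ℝ f)) - C (a*b) * f := by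
    simp only [map_add, map_mul, map_one]; ring
  rw [e]
  rcases n with _ | _ | n
  · simp only [map_add (coeff _), map_sub (coeff _), coeff_C_mul, coeff_derivative, coeff_zero_X_mul]; push_cast; ring
  · simp only [map_add (coeff _), map_sub (coeff _), coeff_C_mul, coeff_derivative, coeff_succ_X_mul,
      coeff_zero_X_mul]
    push_cast; ring
  · simp only [map_add (coeff _), map_sub (coeff _), coeff_C_mul, coeff_derivative, coeff_succ_X_mul]
    push_cast; ring

open PowerSeries in
lemma euler_ps (a b : ℝ) {c : ℝ} (hc : 0 < c) :
    (PowerSeries.mk (co (-(a+b-c)) 1 1)) * (PowerSeries.mk (co a b c))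
      = PowerSeries.mk (co (c-a) (c-b) c) := by
  set H : PowerSeries ℝ := PowerSeries.mk (co (-(a+b-c)) 1 1) with hH
  set F : PowerSeries ℝ := PowerSeries.mk (co a b c) with hF
  have h1 : (1 - X) * (d⁄dX ℝ H) = - C (a+b-c) * H := by
    have e : (1 - X) * (d⁄dX ℝ H) = (d⁄dX ℝ H) - X * (d⁄dX ℝ H) := by ring
    rw [e, ← map_neg]
    ext n
    have hh : co (-(a+b-c)) 1 1 (n+1) * (n+1) = co (-(a+b-c)) 1 1 n * (-(a+b-c)+n) := by
      rw [co_succ _ _ one_pos]; field_simp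
    rcases n with _ | n
    · simp only [map_sub (coeff _), coeff_C_mul, coeff_derivative, coeff_zero_X_mul, hH, coeff_mk]
      push_cast at hh ⊢; linarith
    · simp only [map_sub (coeff _), coeff_C_mul, coeff_derivative, coeff_succ_X_mul, hH, coeff_mk]
      push_cast at hh ⊢; linarith
  have h2 : (1 - X) * (d⁄dX ℝ (d⁄dX ℝ H)) - d⁄dX ℝ H = - C (a+b-c) * (d⁄dX ℝ H) := by
    have := congrArg (d⁄dX ℝ) h1
    rw [← map_neg] at this ⊢
    simp [Derivation.leibniz] at this
    simp
    linear_combination this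
  have hFode : X * (1-X) * (d⁄dX ℝ (d⁄dX ℝ F)) + (C c - (C a + C b + 1) * X) * (d⁄dX ℝ F)
      - C a * C b * F = 0 := by
    ext n
    rw [ode_coeff]
    have : (0:ℝ) < c + n := by positivity
    simp only [hF, coeff_mk, co_succ a b hc, map_zero]
    field_simp; ring
  have key := euler_ring X (C a) (C b) (C c) (C (a+b-c)) F _ _ H _ _ (by simp) h1 h2 hFode
  have hX : (1 - X : PowerSeries ℝ) ≠ 0 := by
    intro h
    have := congrArg (coeff 0) h
    simp at this
  have key2 := (mul_eq_zero.1 key).resolve_left hX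
  have hG : X * (1-X) * (d⁄dX ℝ (d⁄dX ℝ (H*F))) + (C c - (C (c-a) + C (c-b) + 1) * X) * (d⁄dX ℝ (H*F))
      - C (c-a) * C (c-b) * (H*F) = 0 := by
    rw [← key2]
    simp [Derivation.leibniz]
    ring
  ext n
  induction n with
  | zero => simp [hH, hF, co_zero]
  | succ n ih =>
    have := congrArg (coeff n) hG
    rw [ode_coeff, ih, map_zero, coeff_mk] at this
    have h3 : (0:ℝ) < c + n := by positivity
    rw [coeff_mk, co_succ _ _ hc]
    field_simp
    linarith

lemma euler (a b : ℝ) {c : ℝ} (hc : 0 < c) {x : ℝ} (hx : |x| < 1) :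
    (1 - x) ^ (a+b-c) * F21 a b c x = F21 (c-a) (c-b) c x := by
  have h := F21_cc (-(a+b-c)) one_pos hx
  rw [neg_neg] at h
  rw [← h, F21_def, F21_def, F21_def,
    tsum_mul_tsum_eq_tsum_sum_antidiagonal_of_summable_norm (summ _ _ one_pos hx).norm
      (summ _ _ hc hx).norm]
  apply tsum_congr
  intro n
  have e := congrArg (PowerSeries.coeff n) (euler_ps a b hc)
  rw [PowerSeries.coeff_mul] at e
  simp only [PowerSeries.coeff_mk] at e
  rw [← e, Finset.sum_mul]
  apply Finset.sum_congr rfl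
  intro p hp
  rw [← Finset.HasAntidiagonal.mem_antidiagonal.1 hp, pow_add]
  ring

/-- differentiation step -/
lemma core_step {A B α β c α1 β1 c1 : ℝ} (hc : 0 < c) (hc1 : 0 < c1)
    (h : ∀ x ∈ Ioo (0:ℝ) 1, A * F21 α β c (1-x) = B * F21 α1 β1 c1 x) :
    ∀ x ∈ Ioo (0:ℝ) 1, (-A * (α*β/c)) * F21 (α+1) (β+1) (c+1) (1-x)
      = (B * (α1*β1/c1)) * F21 (α1+1) (β1+1) (c1+1) x := by
  intro x hx
  have hx1 : |1 - x| < 1 := by rw [abs_lt]; constructor <;> linarith [hx.1, hx.2]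
  have hx2 : |x| < 1 := by rw [abs_lt]; constructor <;> linarith [hx.1, hx.2]
  have d1 := ((F21_hasDerivAt α β hc hx1).comp_const_sub 1 x).const_mul A
  have d2 := (F21_hasDerivAt α1 β1 hc1 hx2).const_mul B
  have d3 := d2.congr_of_eventuallyEq (f₁ := fun x => A * F21 α β c (1-x)) (by
    filter_upwards [isOpen_Ioo.mem_nhds hx] with y hy using h y hy)
  have := d1.unique d3
  linarith

lemma F21_beta_zero (α c x : ℝ) : F21 α 0 c x = 1 := by
  rw [F21_def, tsum_eq_single 0]
  · simp [co_zero]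
  · intro n hn
    obtain ⟨m, rfl⟩ := Nat.exists_eq_succ_of_ne_zero hn
    simp [co, poch_succ' 0]

lemma F21_beta_neg_one (α c x : ℝ) : F21 α (-1) c x = 1 - α / c * x := by
  rw [F21_def, tsum_eq_sum (s := Finset.range 2)]
  · simp [Finset.sum_range_succ, co, poch, Finset.prod_range_succ]; ring
  · intro n hn
    obtain ⟨m, rfl⟩ : ∃ m, n = m + 2 := ⟨n - 2, by simp at hn; omega⟩
    have : poch (-1) (m+2) = 0 := by
      rw [poch_succ', poch_succ']; simp
    simp [co, this]

/-- constant multiple vanishing near zero -/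
lemma const_zero_right {B α β c : ℝ} (hc : 0 < c)
    (h : ∀ x ∈ Ioo (0:ℝ) 1, B * F21 α β c x = 0) : B = 0 := by
  have hc0 : Tendsto (fun x => B * F21 α β c x) (𝓝[>] 0) (𝓝 (B * F21 α β c 0)) :=
    ((F21_continuousAt α β hc (x := 0) (by simp)).const_mul B).mono_left nhdsWithin_le_nhds |>.congr
      (fun _ => rfl)
  have h2 : Tendsto (fun x => B * F21 α β c x) (𝓝[>] 0) (𝓝 0) := by
    refine tendsto_const_nhds.congr' ?_
    filter_upwards [Ioo_mem_nhdsGT (show (0:ℝ) < 1 by norm_num)] with x hx using (h x hx).symm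
  have := tendsto_nhds_unique hc0 h2
  simpa [F21_zero] using this

lemma const_zero_left {A α β c : ℝ} (hc : 0 < c)
    (h : ∀ x ∈ Ioo (0:ℝ) 1, A * F21 α β c (1-x) = 0) : A = 0 := by
  apply const_zero_right hc (α := α) (β := β)
  intro x hx
  have := h (1-x) ⟨by linarith [hx.2], by linarith [hx.1]⟩
  simpa using this

lemma core (N : ℕ) : ∀ (A B α β c α1 β1 c1 : ℝ), A ≠ 0 → B ≠ 0 → 0 < α → α < c → 0 < α1 → α1 < c1 →
    0 < β + N → 0 < β1 + N →
    (∀ x ∈ Ioo (0:ℝ) 1, A * F21 α β c (1-x) = B * F21 α1 β1 c1 x) → β = 0 ∧ β1 = 0 := by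
  induction N with
  | zero =>
    intro A B α β c α1 β1 c1 hA hB hα hαc hα1 hαc1 hβ hβ1 h
    exfalso
    have hc : 0 < c := by linarith
    have hc1 : 0 < c1 := by linarith
    simp only [Nat.cast_zero, add_zero] at hβ hβ1
    have h2 := core_step hc hc1 h (1/2) ⟨by norm_num, by norm_num⟩
    have h1 := h (1/2) ⟨by norm_num, by norm_num⟩
    have p1 : 0 < F21 α β c (1 - 1/2) :=
      zero_lt_one.trans_le (F21_one_le hα hβ hc (by norm_num) (by norm_num))
    have p2 : 0 < F21 α1 β1 c1 (1/2) :=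
      zero_lt_one.trans_le (F21_one_le hα1 hβ1 hc1 (by norm_num) (by norm_num))
    have p3 : 0 < F21 (α+1) (β+1) (c+1) (1 - 1/2) :=
      zero_lt_one.trans_le (F21_one_le (by linarith) (by linarith) (by linarith) (by norm_num) (by norm_num))
    have p4 : 0 < F21 (α1+1) (β1+1) (c1+1) (1/2) :=
      zero_lt_one.trans_le (F21_one_le (by linarith) (by linarith) (by linarith) (by norm_num) (by norm_num))
    have p5 : 0 < α*β/c := by positivity
    have p6 : 0 < α1*β1/c1 := by positivity
    have p7 := mul_pos p5 p3
    have p8 := mul_pos p6 p4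
    rcases lt_or_gt_of_ne hA with hA | hA
    · have : A * F21 α β c (1 - 1/2) < 0 := mul_neg_of_neg_of_pos hA p1
      have hB' : B < 0 := by
        by_contra hcon
        have := mul_nonneg (not_lt.1 hcon) p2.le
        linarith
      nlinarith [mul_pos (neg_pos.2 hA) p7, mul_pos (neg_pos.2 hB') p8]
    · have : 0 < A * F21 α β c (1 - 1/2) := mul_pos hA p1
      have hB' : 0 < B := by
        by_contra hcon
        have := mul_nonneg (neg_nonneg.2 (not_lt.1 hcon)) p2.le
        linarith
      nlinarith [mul_pos hA p7, mul_pos hB' p8]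
  | succ N ih =>
    intro A B α β c α1 β1 c1 hA hB hα hαc hα1 hαc1 hβ hβ1 h
    have hc : 0 < c := by linarith
    have hc1 : 0 < c1 := by linarith
    have h2 := core_step hc hc1 h
    push_cast at hβ hβ1
    by_cases hb0 : β = 0
    · refine ⟨hb0, ?_⟩
      have := const_zero_right (show 0 < c1 + 1 by linarith) (fun x hx => by
        rw [← h2 x hx, hb0]; simp)
      simpa [hB, hα1.ne', hc1.ne'] using this
    by_cases hb1 : β1 = 0
    · refine ⟨?_, hb1⟩
      have := const_zero_left (show 0 < c + 1 by linarith) (fun x hx => by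
        rw [h2 x hx, hb1]; simp)
      simpa [hA, hα.ne', hc.ne'] using this
    exfalso
    obtain ⟨e1, e2⟩ := ih _ _ _ _ _ _ _ _
      (mul_ne_zero (neg_ne_zero.2 hA) (div_ne_zero (mul_ne_zero hα.ne' hb0) hc.ne'))
      (mul_ne_zero hB (div_ne_zero (mul_ne_zero hα1.ne' hb1) hc1.ne')) (by linarith) (by linarith)
      (by linarith) (by linarith) (by linarith) (by linarith) h2
    obtain rfl : β = -1 := by linarith
    obtain rfl : β1 = -1 := by linarith
    simp only [F21_beta_neg_one] at h
    have k1 := h (1/4) ⟨by norm_num, by norm_num⟩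
    have k2 := h (1/2) ⟨by norm_num, by norm_num⟩
    have q1 : 0 < α / c := by positivity
    have q2 : α / c < 1 := (div_lt_one hc).2 hαc
    have q3 : 0 < α1 / c1 := by positivity
    have e3 : A * (α/c) = - (B * (α1/c1)) := by linarith
    have e4 : A * (1 - α/c) = B := by linarith
    rw [← e4] at e3
    have e5 : A * (α/c + (1-α/c) * (α1/c1)) = 0 := by linarith
    have : 0 < α/c + (1-α/c) * (α1/c1) := by
      have := mul_pos (show 0 < 1 - α/c by linarith) q3
      linarith
    exact (mul_ne_zero hA this.ne') e5

lemma poch_asym {s : ℝ} (hs : 0 < s) :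
    Tendsto (fun n : ℕ => poch s (n+1) / ((n:ℝ)^s * n.factorial)) atTop (𝓝 (1 / Real.Gamma s)) := by
  have h := (Real.GammaSeq_tendsto_Gamma s).inv₀ (Real.Gamma_pos_of_pos hs).ne'
  rw [one_div]
  refine h.congr ?_
  intro n
  simp [Real.GammaSeq, poch]

lemma co_asym {a b c : ℝ} (ha : 0 < a) (hb : 0 < b) (hc : 0 < c) :
    ∃ L : ℝ, 0 < L ∧ Tendsto (fun n : ℕ => co a b c (n+1) * (n+1) / (n:ℝ)^(a+b-c)) atTop (𝓝 L) := by
  have ga := Real.Gamma_pos_of_pos ha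
  have gb := Real.Gamma_pos_of_pos hb
  have gc := Real.Gamma_pos_of_pos hc
  refine ⟨_, ?_, Tendsto.congr' ?_ (((poch_asym ha).mul (poch_asym hb)).div (poch_asym hc) (by positivity))⟩
  · positivity
  · filter_upwards [eventually_gt_atTop 0] with n hn
    have hn : (0:ℝ) < n := by exact_mod_cast hn
    have := poch_pos hc (n+1)
    have hf : (0:ℝ) < n.factorial := by positivity
    have := rpow_pos_of_pos hn a
    have := rpow_pos_of_pos hn b
    have := rpow_pos_of_pos hn c
    simp only [Pi.div_apply]
    rw [rpow_sub hn, rpow_add hn]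
    unfold co
    rw [Nat.factorial_succ]
    push_cast
    field_simp

lemma co_compare {a b c a' b' c' : ℝ} (ha : 0 < a) (hb : 0 < b) (hc : 0 < c)
    (ha' : 0 < a') (hb' : 0 < b') (hc' : 0 < c') (h : a + b - c ≤ a' + b' - c') :
    ∃ K : ℝ, 0 < K ∧ ∀ n, co a b c n ≤ K * co a' b' c' n := by
  obtain ⟨L, hL, hq⟩ := co_asym ha hb hc
  obtain ⟨L', hL', hq'⟩ := co_asym ha' hb' hc'
  obtain ⟨M, hM⟩ := (hq.div hq' hL'.ne').bddAbove_range
  refine ⟨max (max M (co a b c 1 / co a' b' c' 1)) 1, by positivity, ?_⟩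
  intro n
  have p := co_pos ha hb hc n
  have p' := co_pos ha' hb' hc' n
  rw [← div_le_iff₀ p']
  rcases n with _ | _ | n
  · simp [co_zero]
  · exact (le_max_right _ _).trans (le_max_left _ _)
  · refine le_trans ?_ ((le_max_left _ _).trans (le_max_left _ _))
    refine le_trans ?_ (hM ⟨n+1, rfl⟩)
    have hn : (0:ℝ) < ((n+1:ℕ):ℝ) := by positivity
    have e1 := rpow_pos_of_pos hn (a+b-c)
    have e2 := rpow_pos_of_pos hn (a'+b'-c')
    have e3 : ((n+1:ℕ):ℝ)^(a+b-c) ≤ ((n+1:ℕ):ℝ)^(a'+b'-c') :=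
      rpow_le_rpow_of_exponent_le (by push_cast; linarith [(Nat.cast_nonneg n : (0:ℝ) ≤ n)]) h
    have e4 : co a b c (n+1+1) * (((n+1:ℕ):ℝ)+1) / ((n+1:ℕ):ℝ)^(a+b-c) /
        (co a' b' c' (n+1+1) * (((n+1:ℕ):ℝ)+1) / ((n+1:ℕ):ℝ)^(a'+b'-c')) =
        co a b c (n+1+1) / co a' b' c' (n+1+1) * (((n+1:ℕ):ℝ)^(a'+b'-c') / ((n+1:ℕ):ℝ)^(a+b-c)) := by
      field_simp
    simp only [Pi.div_apply]
    rw [e4]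
    exact le_mul_of_one_le_right (by positivity) ((one_le_div e1).2 e3)

lemma F21_compare {a b c a' b' c' : ℝ} (ha : 0 < a) (hb : 0 < b) (hc : 0 < c)
    (ha' : 0 < a') (hb' : 0 < b') (hc' : 0 < c') (h : a + b - c ≤ a' + b' - c') :
    ∃ K : ℝ, 0 < K ∧ ∀ y, 0 ≤ y → y < 1 → F21 a b c y ≤ K * F21 a' b' c' y := by
  obtain ⟨K, hK, hle⟩ := co_compare ha hb hc ha' hb' hc' h
  refine ⟨K, hK, fun y hy hy1 => ?_⟩
  have hya : |y| < 1 := by rwa [abs_of_nonneg hy]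
  rw [F21_def, F21_def, ← tsum_mul_left]
  refine (summ a b hc hya).tsum_le_tsum (fun n => ?_) ((summ a' b' hc' hya).mul_left K)
  rw [← mul_assoc]
  exact mul_le_mul_of_nonneg_right (hle n) (pow_nonneg hy n)

lemma tendsto_one_sub : Tendsto (fun y : ℝ => 1 - y) (𝓝[<] 1) (𝓝[>] 0) := by
  refine tendsto_nhdsWithin_iff.2 ⟨?_, ?_⟩
  · have : Tendsto (fun y : ℝ => 1 - y) (𝓝 1) (𝓝 (1 - 1)) := tendsto_const_nhds.sub tendsto_id
    rw [sub_self] at this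
    exact this.mono_left nhdsWithin_le_nhds
  · filter_upwards [self_mem_nhdsWithin] with y hy
    simpa using hy

lemma tendsto_rpow_top {p : ℝ} (hp : p < 0) : Tendsto (fun y : ℝ => (1 - y)^p) (𝓝[<] 1) atTop :=
  (tendsto_rpow_neg_nhdsGT_zero hp).comp tendsto_one_sub

lemma tendsto_rpow_zero {p : ℝ} (hp : 0 < p) : Tendsto (fun y : ℝ => (1 - y)^p) (𝓝[<] 1) (𝓝 0) := by
  have h := (continuousAt_rpow_const 0 p (Or.inr hp.le)).tendsto
  rw [zero_rpow hp.ne'] at h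
  exact (h.mono_left nhdsWithin_le_nhds).comp tendsto_one_sub

lemma Ioo_near_one : Ioo (0:ℝ) 1 ∈ 𝓝[<] (1:ℝ) := Ioo_mem_nhdsLT (by norm_num)

lemma dichotomy {a a' b t K0 : ℝ} (ha : 0 < a) (ha' : 0 < a') (hb : 0 < b) (hK0 : 0 < K0)
    (h : Tendsto (fun y => F21 a b (a+a') y * (1-y)^t) (𝓝[<] 1) (𝓝 K0)) :
    (t = 0 ∧ b < a') ∨ (t = b - a' ∧ a' < b) := by
  have hc : 0 < a + a' := by positivity
  have low : ∀ κ p : ℝ, 0 < κ → p < 0 →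
      (∀ y ∈ Ioo (0:ℝ) 1, κ * (1-y)^p ≤ F21 a b (a+a') y * (1-y)^t) → False := by
    intro κ p hκ hp hle
    have h1 : Tendsto (fun y : ℝ => κ * (1 - y)^p) (𝓝[<] 1) atTop :=
      (tendsto_rpow_top hp).const_mul_atTop hκ
    have h2 : Tendsto (fun y => F21 a b (a+a') y * (1-y)^t) (𝓝[<] 1) atTop :=
      tendsto_atTop_mono' _ (by filter_upwards [Ioo_near_one] with y hy using hle y hy) h1
    exact not_tendsto_nhds_of_tendsto_atTop h2 _ h
  have ht0 : 0 ≤ t := by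
    by_contra hcon
    refine low 1 t one_pos (not_le.1 hcon) (fun y hy => ?_)
    have := rpow_pos_of_pos (show 0 < 1 - y by linarith [hy.2]) t
    exact mul_le_mul_of_nonneg_right (F21_one_le ha hb hc hy.1.le hy.2) this.le
  have hlow : 0 < b - a' → b - a' ≤ t := by
    intro hσ
    by_contra hcon
    obtain ⟨K, hK, hle⟩ := F21_compare hσ one_pos one_pos ha hb hc (by linarith)
    refine low K⁻¹ (t - (b-a')) (by positivity) (by linarith) (fun y hy => ?_)
    have h1y : 0 < 1 - y := by linarith [hy.2]
    have := rpow_pos_of_pos h1y t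
    have h3 := hle y hy.1.le hy.2
    rw [F21_cc _ one_pos (by rw [abs_of_pos hy.1]; exact hy.2)] at h3
    rw [sub_eq_neg_add t, rpow_add h1y, ← mul_assoc]
    refine mul_le_mul_of_nonneg_right ?_ this.le
    rwa [inv_mul_le_iff₀ hK]
  have hup : 0 < t → t ≤ b - a' := by
    intro ht
    by_contra hcon
    set ε := max (b - a') (t/2) with hε
    have hε0 : 0 < ε := lt_max_of_lt_right (by linarith)
    have hεt : ε < t := max_lt (by linarith) (by linarith)
    have hεσ : b - a' ≤ ε := le_max_left _ _
    obtain ⟨K, hK, hle⟩ := F21_compare ha hb hc hε0 one_pos one_pos (by linarith)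
    have h1 : Tendsto (fun y : ℝ => K * (1 - y)^(t-ε)) (𝓝[<] 1) (𝓝 (K * 0)) :=
      (tendsto_rpow_zero (by linarith)).const_mul K
    have h2 := le_of_tendsto_of_tendsto h h1 (by
      filter_upwards [Ioo_near_one] with y hy
      have h1y : 0 < 1 - y := by linarith [hy.2]
      have := rpow_pos_of_pos h1y t
      have h3 := hle y hy.1.le hy.2
      rw [F21_cc _ one_pos (by rw [abs_of_pos hy.1]; exact hy.2)] at h3
      rw [sub_eq_neg_add t, rpow_add h1y, ← mul_assoc]
      exact mul_le_mul_of_nonneg_right h3 this.le)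
    linarith
  rcases ht0.eq_or_lt with ht | ht
  · left
    refine ⟨ht.symm, ?_⟩
    by_contra hcon
    have hba : b = a' := by
      by_contra hne
      have : 0 < b - a' := sub_pos.2 (lt_of_le_of_ne (not_lt.1 hcon) (Ne.symm hne))
      linarith [hlow this]
    obtain ⟨K, hK, hle⟩ := co_compare one_pos one_pos two_pos ha hb hc (by linarith)
    have hbd : ∀ N : ℕ, ∑ n ∈ Finset.range N, co a b (a+a') n ≤ K0 := by
      intro N
      have hc1 : Tendsto (fun y : ℝ => ∑ n ∈ Finset.range N, co a b (a+a') n * y^n) (𝓝[<] 1)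
          (𝓝 (∑ n ∈ Finset.range N, co a b (a+a') n * 1^n)) := by
        apply Tendsto.mono_left _ nhdsWithin_le_nhds
        exact Continuous.tendsto (by fun_prop) 1
      simp only [one_pow, mul_one] at hc1
      refine le_of_tendsto_of_tendsto hc1 h ?_
      filter_upwards [Ioo_near_one] with y hy
      rw [← ht, rpow_zero, mul_one, F21_def]
      exact (summ a b hc (by rw [abs_of_pos hy.1]; exact hy.2)).sum_le_tsum _
        (fun n _ => mul_nonneg (co_pos ha hb hc n).le (pow_nonneg hy.1.le n))
    have hco : ∀ n : ℕ, co 1 1 2 n = 1 / ((n:ℝ)+1) := by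
      intro n
      induction n with
      | zero => simp [co_zero]
      | succ n ih => rw [co_succ _ _ two_pos, ih]; push_cast; field_simp; ring
    have hdiv := Real.tendsto_sum_range_one_div_nat_succ_atTop
    obtain ⟨N, hN⟩ := (hdiv.eventually_gt_atTop (K * K0)).exists
    have : ∑ n ∈ Finset.range N, (1 / ((n:ℝ)+1)) ≤ K * ∑ n ∈ Finset.range N, co a b (a+a') n := by
      rw [Finset.mul_sum]
      refine Finset.sum_le_sum (fun n _ => ?_)
      rw [← hco]; exact hle n
    have := mul_le_mul_of_nonneg_left (hbd N) hK.le
    linarith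
  · right
    have := hup ht
    have := hlow (by linarith)
    constructor <;> linarith

lemma half {C C1 a a' b a1 a1' b1 : ℝ} (hC : 0 < C) (hC1 : 0 < C1)
    (ha : 0 < a) (ha' : 0 < a') (hb : 0 < b) (ha1 : 0 < a1) (ha1' : 0 < a1')
    (h : ∀ x ∈ Ioo (0:ℝ) 1, C * (1-x)^(a-1) * x^(b-1) * F21 a b (a+a') (1-x)
      = C1 * x^(a1-1) * (1-x)^(b1-1) * F21 a1 b1 (a1+a1') x) :
    ∃ α β : ℝ, 0 < α ∧ α < a + a' ∧
      (∀ y ∈ Ioo (0:ℝ) 1, F21 a b (a+a') y * (1-y)^(b-a1) = F21 α β (a+a') y) ∧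
      (β = 0 → a1 = a' ∧ b = a + a') := by
  have hc : 0 < a + a' := by positivity
  have hc1 : 0 < a1 + a1' := by positivity
  have key : ∀ y ∈ Ioo (0:ℝ) 1, F21 a b (a+a') y * (1-y)^(b-a1)
      = C1 / C * y^(b1-a) * F21 a1 b1 (a1+a1') (1-y) := by
    intro y hy
    have h0 : 0 < y := hy.1
    have h1 : 0 < 1 - y := by linarith [hy.2]
    have e := h (1-y) ⟨h1, by linarith⟩
    rw [sub_sub_cancel] at e
    have e1 : (1-y)^(b-1) = (1-y)^(b-a1) * (1-y)^(a1-1) := by rw [← rpow_add h1]; ring_nf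
    have e2 : y^(b1-1) = y^(b1-a) * y^(a-1) := by rw [← rpow_add h0]; ring_nf
    rw [e1, e2] at e
    have p1 := rpow_pos_of_pos h1 (a1-1)
    have p2 := rpow_pos_of_pos h0 (a-1)
    have p3 : y^(a-1) * (1-y)^(a1-1) ≠ 0 := (mul_pos p2 p1).ne'
    rw [div_mul_eq_mul_div, div_mul_eq_mul_div, eq_div_iff hC.ne']
    apply mul_left_cancel₀ p3
    linarith
  have ht : Tendsto (fun y => F21 a b (a+a') y * (1-y)^(b-a1)) (𝓝[<] 1) (𝓝 (C1/C)) := by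
    have t1 : Tendsto (fun y : ℝ => y^(b1-a)) (𝓝[<] 1) (𝓝 1) := by
      have := (continuousAt_rpow_const 1 (b1-a) (Or.inl one_ne_zero)).tendsto
      rw [one_rpow] at this
      exact this.mono_left nhdsWithin_le_nhds
    have t2 : Tendsto (fun y : ℝ => F21 a1 b1 (a1+a1') (1-y)) (𝓝[<] 1) (𝓝 1) := by
      have := (F21_continuousAt a1 b1 hc1 (x := 0) (by simp)).tendsto
      rw [F21_zero] at this
      exact (this.mono_left nhdsWithin_le_nhds).comp tendsto_one_sub
    have t3 := (t1.const_mul (C1/C)).mul t2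
    rw [mul_one, mul_one] at t3
    refine t3.congr' ?_
    filter_upwards [Ioo_near_one] with y hy using (key y hy).symm
  rcases dichotomy ha ha' hb (div_pos hC1 hC) ht with ⟨e, hlt⟩ | ⟨e, hlt⟩
  · refine ⟨a, b, ha, by linarith, ?_, fun hb0 => absurd hb0 hb.ne'⟩
    intro y hy
    rw [e, rpow_zero, mul_one]
  · refine ⟨a', a + a' - b, ha', by linarith, ?_, fun hb0 => ⟨by linarith, by linarith⟩⟩
    intro y hy
    have := euler a b hc (x := y) (by rw [abs_of_pos hy.1]; exact hy.2)
    rw [show a + a' - a = a' by ring, show a + b - (a+a') = b - a' by ring] at this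
    rw [e, ← this, mul_comm]

lemma params {C C1 a a' b a1 a1' b1 : ℝ} (hC : 0 < C) (hC1 : 0 < C1)
    (ha : 0 < a) (ha' : 0 < a') (hb : 0 < b) (ha1 : 0 < a1) (ha1' : 0 < a1') (hb1 : 0 < b1)
    (h : ∀ x ∈ Ioo (0:ℝ) 1, C * (1-x)^(a-1) * x^(b-1) * F21 a b (a+a') (1-x)
      = C1 * x^(a1-1) * (1-x)^(b1-1) * F21 a1 b1 (a1+a1') x) :
    a1 = a' ∧ a1' = a ∧ b = a + a' ∧ b1 = a + a' := by
  obtain ⟨α, β, hα, hαc, hF, hz⟩ := half hC hC1 ha ha' hb ha1 ha1' h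
  obtain ⟨α1, β1, hα1, hαc1, hF1, hz1⟩ := half (C := C1) (C1 := C) (a := a1) (a' := a1') (b := b1)
    (a1 := a) (a1' := a') (b1 := b) hC1 hC ha1 ha1' hb1 ha ha' (by
      intro x hx
      have := h (1-x) ⟨by linarith [hx.2], by linarith [hx.1]⟩
      rw [sub_sub_cancel] at this
      exact this.symm)
  have hEq : ∀ x ∈ Ioo (0:ℝ) 1, C * F21 α β (a+a') (1-x) = C1 * F21 α1 β1 (a1+a1') x := by
    intro x hx
    have h0 : 0 < x := hx.1
    have h1 : 0 < 1 - x := by linarith [hx.2]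
    rw [← hF (1-x) ⟨h1, by linarith⟩, ← hF1 x hx, sub_sub_cancel]
    have e := h x hx
    have e1 : x^(b-1) = x^(b-a1) * x^(a1-1) := by rw [← rpow_add h0]; ring_nf
    have e2 : (1-x)^(b1-1) = (1-x)^(b1-a) * (1-x)^(a-1) := by rw [← rpow_add h1]; ring_nf
    rw [e1, e2] at e
    have p3 : (1-x)^(a-1) * x^(a1-1) ≠ 0 :=
      (mul_pos (rpow_pos_of_pos h1 (a-1)) (rpow_pos_of_pos h0 (a1-1))).ne'
    apply mul_left_cancel₀ p3
    linarith
  obtain ⟨N, hN⟩ := exists_nat_gt (max (-β) (-β1))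
  obtain ⟨z, z1⟩ := core N C C1 α β (a+a') α1 β1 (a1+a1') hC.ne' hC1.ne' hα hαc hα1 hαc1
    (by linarith [le_max_left (-β) (-β1)]) (by linarith [le_max_right (-β) (-β1)]) hEq
  obtain ⟨r1, r2⟩ := hz z
  obtain ⟨r3, r4⟩ := hz1 z1
  refine ⟨r1, r3.symm, r2, by linarith⟩

lemma Gamma_add_nat {a : ℝ} (ha : 0 < a) (n : ℕ) : Real.Gamma (a + n) = poch a n * Real.Gamma a := by
  induction n with
  | zero => simp [poch_zero]
  | succ n ih =>
    push_cast
    rw [← add_assoc, Real.Gamma_add_one (by positivity), ih, poch_succ]; ring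

lemma lint_beta {p q : ℝ} (hp : 0 < p) (hq : 0 < q) :
    ∫⁻ x in Ioo (0:ℝ) 1, ENNReal.ofReal (x^(p-1) * (1-x)^(q-1)) = ENNReal.ofReal (beta p q) := by
  have h := lintegral_betaPDF_eq_one hp hq
  rw [lintegral_betaPDF] at h
  have hb := beta_pos hp hq
  have e : ∀ x : ℝ, ENNReal.ofReal (1 / beta p q * x^(p-1) * (1-x)^(q-1))
      = ENNReal.ofReal (1 / beta p q) * ENNReal.ofReal (x^(p-1) * (1-x)^(q-1)) := by
    intro x
    rw [mul_assoc, ENNReal.ofReal_mul (by positivity)]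
  simp only [e] at h
  rw [lintegral_const_mul _ (by fun_prop)] at h
  have h2 := congrArg (fun z => ENNReal.ofReal (beta p q) * z) h
  simp only [mul_one] at h2
  rw [← mul_assoc, ← ENNReal.ofReal_mul hb.le, mul_one_div_cancel hb.ne', ENNReal.ofReal_one, one_mul] at h2
  exact h2

lemma Cbh_eq {a a' : ℝ} (ha : 0 < a) (ha' : 0 < a') : Cbh a a' (a+a') = 1 / beta a a' := by
  set b := a + a' with hbdef
  have hb : 0 < b := by positivity
  have hab : 0 < a + b := by positivity
  have gab := Real.Gamma_pos_of_pos hab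
  have ga := Real.Gamma_pos_of_pos ha
  have gb := Real.Gamma_pos_of_pos hb
  have hBab := beta_pos ha hb
  have hB := beta_pos ha ha'
  have hsum : ∑' n : ℕ, ENNReal.ofReal (poch a n / n.factorial * beta (a+n) b)
      = ENNReal.ofReal (beta a a') := by
    rw [← lint_beta ha ha']
    have e1 : ∀ n : ℕ, ENNReal.ofReal (poch a n / n.factorial * beta (a+n) b)
        = ∫⁻ x in Ioo (0:ℝ) 1, ENNReal.ofReal (poch a n / n.factorial * (x^(a+n-1) * (1-x)^(b-1))) := by
      intro n
      have hp : 0 ≤ poch a n / n.factorial := by have := poch_pos ha n; positivity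
      rw [ENNReal.ofReal_mul hp, ← lint_beta (by positivity) hb, ← lintegral_const_mul _ (by fun_prop)]
      simp only [ENNReal.ofReal_mul hp]
    simp only [e1]
    rw [← lintegral_tsum (fun n => by fun_prop)]
    refine setLIntegral_congr_fun measurableSet_Ioo (fun x hx => ?_)
    have h0 : 0 < x := hx.1
    have h1 : 0 < 1 - x := by linarith [hx.2]
    have hxa : |x| < 1 := by rw [abs_of_pos h0]; exact hx.2
    have e2 : ∀ n : ℕ, poch a n / n.factorial * (x^(a+n-1) * (1-x)^(b-1))
        = (x^(a-1) * (1-x)^(b-1)) * (co a b b n * x^n) := by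
      intro n
      rw [co_cc a hb, show a + n - 1 = (a-1) + n by ring, rpow_add h0, rpow_natCast]; ring
    simp only [e2]
    rw [← ENNReal.ofReal_tsum_of_nonneg]
    · rw [tsum_mul_left, ← F21_def, F21_cc a hb hxa, mul_assoc, ← rpow_add h1]
      congr 3
      rw [hbdef]; ring
    · intro n
      have := co_pos ha hb hb n
      positivity
    · exact (summ a b hb hxa).mul_left _
  have hsum2 := congrArg ENNReal.toReal hsum
  rw [ENNReal.tsum_toReal_eq (fun n => ENNReal.ofReal_ne_top), ENNReal.toReal_ofReal hB.le] at hsum2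
  have hF : F32one a a b (a+b) b * beta a b = beta a a' := by
    rw [← hsum2, F32one, ← tsum_mul_right]
    apply tsum_congr
    intro n
    have p1 := poch_pos ha n
    have p2 := poch_pos hb n
    have p3 := poch_pos hab n
    have p4 := beta_pos (show 0 < a + (n:ℝ) by positivity) hb
    rw [ENNReal.toReal_ofReal (by positivity)]
    unfold beta
    rw [show a + n + b = (a + b) + n by ring, Gamma_add_nat ha, Gamma_add_nat hab]
    field_simp
  have hF' : F32one a a b (a+b) b = beta a a' / beta a b := by
    rw [← hF]; field_simp
  rw [Cbh, ← hbdef, hF']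
  conv_lhs => rw [beta.eq_def a b]
  field_simp

lemma Cbh_nonneg {a a' b : ℝ} (ha : 0 < a) (ha' : 0 < a') (hb : 0 < b) : 0 ≤ Cbh a a' b := by
  have hF : 0 ≤ F32one a a b (a+b) (a+a') := by
    apply tsum_nonneg
    intro n
    have p1 := poch_pos ha n
    have p2 := poch_pos hb n
    have p3 := poch_pos (add_pos ha hb) n
    have p4 := poch_pos (add_pos ha ha') n
    positivity
  have ga := Real.Gamma_pos_of_pos ha
  have gb := Real.Gamma_pos_of_pos hb
  have gab := Real.Gamma_pos_of_pos (add_pos ha hb)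
  unfold Cbh; positivity

lemma F21_continuousOn (a b : ℝ) {c : ℝ} (hc : 0 < c) : ContinuousOn (F21 a b c) (Ioo 0 1) := by
  intro x hx
  exact (F21_continuousAt a b hc (by rw [abs_of_pos hx.1]; exact hx.2)).continuousWithinAt

lemma bh_contOn {a a' b : ℝ} (ha : 0 < a) (ha' : 0 < a') :
    ContinuousOn (fun x => Cbh a a' b * x ^ (a - 1) * (1 - x) ^ (b - 1) * F21 a b (a + a') x)
      (Ioo 0 1) := by
  refine ContinuousOn.mul (ContinuousOn.mul (ContinuousOn.mul continuousOn_const ?_) ?_)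
    (F21_continuousOn a b (by positivity))
  · exact continuousOn_id.rpow_const (fun x hx => Or.inl hx.1.ne')
  · exact (continuousOn_const.sub continuousOn_id).rpow_const
      (fun x hx => Or.inl (sub_pos.2 hx.2).ne')

lemma bhDens_measurable {a a' b : ℝ} (ha : 0 < a) (ha' : 0 < a') : Measurable (bhDens a a' b) := by
  classical
  have h := ContinuousOn.measurable_piecewise (bh_contOn (b := b) ha ha')
    (continuousOn_const (c := (0:ℝ)) (s := (Ioo (0:ℝ) 1)ᶜ)) measurableSet_Ioo
  convert h using 1
  ext x
  simp only [bhDens, Set.piecewise, Set.mem_Ioo]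

lemma map_bh {a a' b : ℝ} (ha : 0 < a) (ha' : 0 < a') :
    (bhMeasure a a' b).map (fun x => 1 - x) =
      volume.withDensity (fun x => ENNReal.ofReal (bhDens a a' b (1 - x))) := by
  have hm : Measurable (fun x : ℝ => 1 - x) := by fun_prop
  have hd : Measurable (fun x => ENNReal.ofReal (bhDens a a' b x)) :=
    (bhDens_measurable ha ha').ennreal_ofReal
  ext s hs
  rw [Measure.map_apply hm hs, bhMeasure, withDensity_apply _ (hm hs), withDensity_apply _ hs]
  have := (Measure.measurePreserving_sub_left (volume : Measure ℝ) 1).setLIntegral_comp_preimage hs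
    (hd.comp hm)
  simpa only [Function.comp_def, sub_sub_cancel] using this

lemma Cbh_pos_of_prob {a a' b : ℝ} (ha : 0 < a) (ha' : 0 < a') (hb : 0 < b)
    (h : IsProbabilityMeasure (bhMeasure a a' b)) : 0 < Cbh a a' b := by
  refine lt_of_le_of_ne (Cbh_nonneg ha ha' hb) (fun h0 => ?_)
  have h1 := h.measure_univ
  have e : bhDens a a' b = fun _ => 0 := by
    ext x; simp [bhDens, ← h0]
  rw [bhMeasure, e] at h1
  simp at h1


theorem bh_one_sub {Ω : Type*} [MeasurableSpace Ω] (μ : Measure Ω)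
    [IsProbabilityMeasure μ] (X : Ω → ℝ) (hX : Measurable X)
    (a a' b a1 a1' b1 : ℝ)
    (ha : 0 < a) (ha' : 0 < a') (hb : 0 < b)
    (ha1 : 0 < a1) (ha1' : 0 < a1') (hb1 : 0 < b1)
    (hXlaw : μ.map X = bhMeasure a a' b) :
    μ.map (fun ω => 1 - X ω) = bhMeasure a1 a1' b1 ↔
      a1 = a' ∧ a1' = a ∧ b = a + a' ∧ b1 = a + a' := by
  have hm : Measurable (fun x : ℝ => 1 - x) := by fun_prop
  have hmap : μ.map (fun ω => 1 - X ω) =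
      volume.withDensity (fun x => ENNReal.ofReal (bhDens a a' b (1 - x))) := by
    rw [← map_bh ha ha', ← hXlaw, Measure.map_map hm hX]; rfl
  have hd := bhDens_measurable (b := b) ha ha'
  have hd1 := bhDens_measurable (b := b1) ha1 ha1'
  constructor
  · intro h
    have hP : IsProbabilityMeasure (bhMeasure a a' b) := by
      rw [← hXlaw]; exact Measure.isProbabilityMeasure_map hX.aemeasurable
    have hP1 : IsProbabilityMeasure (bhMeasure a1 a1' b1) := by
      rw [← h]; exact Measure.isProbabilityMeasure_map (hm.comp hX).aemeasurable
    have hC := Cbh_pos_of_prob ha ha' hb hP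
    have hC1 := Cbh_pos_of_prob ha1 ha1' hb1 hP1
    have hd2 : Measurable (fun x => bhDens a a' b (1 - x)) := hd.comp hm
    rw [hmap, bhMeasure, withDensity_eq_iff_of_sigmaFinite
      hd2.ennreal_ofReal.aemeasurable hd1.ennreal_ofReal.aemeasurable] at h
    apply params hC hC1 ha ha' hb ha1 ha1' hb1
    have hflip : MapsTo (fun x : ℝ => 1 - x) (Ioo 0 1) (Ioo 0 1) := by
      intro x hx; exact ⟨by linarith [hx.2], by linarith [hx.1]⟩
    have hEq := Measure.eqOn_open_of_ae_eq (μ := (volume : Measure ℝ)) (U := Ioo (0:ℝ) 1)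
      (f := fun x => Cbh a a' b * (1-x)^(a-1) * (1-(1-x))^(b-1) * F21 a b (a+a') (1-x))
      (g := fun x => Cbh a1 a1' b1 * x^(a1-1) * (1-x)^(b1-1) * F21 a1 b1 (a1+a1') x)
      (by
        rw [EventuallyEq, ae_restrict_iff' measurableSet_Ioo]
        filter_upwards [h] with x hx hxI
        have hxI' := hflip hxI
        simp only [bhDens] at hx
        rw [if_pos ⟨hxI'.1, hxI'.2⟩, if_pos ⟨hxI.1, hxI.2⟩] at hx
        have nn : ∀ {A A' B y : ℝ}, 0 < A → 0 < A' → 0 < B → y ∈ Ioo (0:ℝ) 1 →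
            0 ≤ Cbh A A' B * y^(A-1) * (1-y)^(B-1) * F21 A B (A+A') y := by
          intro A A' B y hA hA' hB hy
          have p1 := Cbh_nonneg hA hA' hB
          have p2 := rpow_pos_of_pos hy.1 (A-1)
          have p3 := rpow_pos_of_pos (show 0 < 1 - y by linarith [hy.2]) (B-1)
          have p4 := F21_one_le hA hB (add_pos hA hA') hy.1.le hy.2
          have p5 : 0 ≤ F21 A B (A+A') y := zero_le_one.trans p4
          positivity
        exact (ENNReal.ofReal_eq_ofReal_iff (nn ha ha' hb hxI') (nn ha1 ha1' hb1 hxI)).1 hx)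
      isOpen_Ioo
      ((bh_contOn (b := b) ha ha').comp (by fun_prop) hflip) (bh_contOn ha1 ha1')
    intro x hx
    have := hEq hx
    simp only [sub_sub_cancel] at this
    exact this
  · rintro ⟨rfl, rfl, rfl, rfl⟩
    rw [hmap, bhMeasure]
    congr 1
    ext x
    congr 1
    have hc : 0 < a1' + a1 := by positivity
    by_cases hx : 0 < x ∧ x < 1
    · have h0 : 0 < x := hx.1
      have h1 : 0 < 1 - x := by linarith [hx.2]
      simp only [bhDens]
      rw [if_pos ⟨h1, by linarith⟩, if_pos hx, Cbh_eq ha ha', add_comm a1 a1',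
        F21_cc _ hc (by rw [abs_of_pos h1]; linarith), F21_cc _ hc (by rw [abs_of_pos h0]; linarith)]
      have hC2 : Cbh a1 a1' (a1' + a1) = 1 / beta a1' a1 := by
        rw [add_comm, Cbh_eq ha1 ha1']
        congr 1
        unfold beta; rw [add_comm, mul_comm (Real.Gamma a1)]
      rw [hC2, sub_sub_cancel, mul_assoc, mul_assoc, mul_assoc, mul_assoc, ← rpow_add h0, ← rpow_add h1,
        show a1' + a1 - 1 + -a1' = a1 - 1 by ring, show a1' + a1 - 1 + -a1 = a1' - 1 by ring,
        mul_comm (x^(a1-1))]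
    · simp only [bhDens]
      rw [if_neg hx, if_neg (fun h => hx ⟨by linarith [h.2], by linarith [h.1]⟩)]
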